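/- Let U be a bounded open set in ℝ^d with closure U̅, and let C(U̅) be the Banach space of continuous real-valued functions on U̅ with the supremum norm. Then the set of functions f ∈ C(U̅) whose restriction to U is strongly nowhere differentiable contains a G_δ subset that is dense in C(U̅). -/

import Mathlib

open Set Filter Topology

/-- A test curve in `ℝ^d`: a `C¹` curve `c : [a,b] → ℝ^d` (with `a < b`) of unit speed
whose derivative is `γ`-Hölder for some `γ ∈ (0,1]`. -/
def IsTestCurve {d : ℕ} (a b : ℝ) (c : ℝ → EuclideanSpace ℝ (Fin d)) : Prop :=
  a < b ∧ ContDiffOn ℝ 1 c (Icc a b) ∧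
    (∀ s ∈ Icc a b, ‖derivWithin c (Icc a b) s‖ = 1) ∧
    ∃ γ ∈ Ioc (0 : ℝ) 1, ∃ ρ : ℝ, 0 ≤ ρ ∧
      ∀ s₁ ∈ Icc a b, ∀ s₂ ∈ Icc a b,
        ‖derivWithin c (Icc a b) s₂ - derivWithin c (Icc a b) s₁‖ ≤ ρ * |s₂ - s₁| ^ γ

/-- `f` is strongly nowhere differentiable on `U`: for every test curve with image in `U`,
the composition `f ∘ c` is differentiable at no point of `(a,b)`. -/
def StronglyNowhereDiffOn {d : ℕ} (f : EuclideanSpace ℝ (Fin d) → ℝ)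
    (U : Set (EuclideanSpace ℝ (Fin d))) : Prop :=
  ∀ (a b : ℝ) (c : ℝ → EuclideanSpace ℝ (Fin d)), IsTestCurve a b c →
    (∀ s ∈ Icc a b, c s ∈ U) →
    ∀ s₀ ∈ Ioo a b, ¬ DifferentiableWithinAt ℝ (f ∘ c) (Icc a b) s₀

open Classical in
/-- Extend a continuous function on `closure U` to all of `ℝ^d` by zero. -/
noncomputable def extendCl {d : ℕ} (U : Set (EuclideanSpace ℝ (Fin d)))
    (f : C(closure U, ℝ)) : EuclideanSpace ℝ (Fin d) → ℝ :=
  fun x => if hx : x ∈ closure U then f ⟨x, hx⟩ else 0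

/-!
Fix a continuous `φ` on a compact metric space `X`. For each `C > 0`, the functions `f` that from
every `x` change by more than `C * t` on the part of the level set `φ = φ x + t` within distance
`C * t` of `x`, for some `0 < t ≤ 1 / C` and with a uniform margin, form an open set. It is dense:
adding a small, rapidly oscillating sine of `φ` to `f` puts it there. By Baire's theorem, a generic
`f` has this property for all `C`.

If a curve `c` is Lipschitz at `s₀` and `φ ∘ c` has nonzero derivative there, then for small `t > 0`
the curve meets `φ = φ (c s₀) + t` within distance `O(t)` of `c s₀` and at a time `s₀ + O(t)`, so
`f ∘ c` is not Lipschitz at `s₀`. Countably many linear functionals suffice as `φ`: one of them does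
not vanish on the velocity `c' s₀`.
-/

/-- The functions `f` which are steep with slope `C` across the levels of `φ`: from every point `x`,
at some scale `t ≤ 1 / C`, they change by more than `C * t` on reaching the level `φ x + t` within
distance `C * t`. The margin `δ`, uniform in `x`, makes this an open condition on `f`. -/
def steepFunctions {X : Type*} [PseudoMetricSpace X] (φ : C(X, ℝ)) (C : ℝ) : Set C(X, ℝ) :=
  {f | ∃ δ > 0, ∀ x, ∃ t > 0, C * t ≤ 1 ∧
    ∀ y, φ y = φ x + t → dist y x ≤ C * t → C * t + δ ≤ |f y - f x|}

/-- A function on a subset `K` of a normed space which is Lipschitz at no point of a curve in `K`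
where the curve has a nonzero velocity `v`. Only the germ of the curve at that point matters. -/
def NowhereLipschitzAlongCurves {E : Type*} [NormedAddCommGroup E] [NormedSpace ℝ E] {K : Set E}
    (f : K → ℝ) : Prop :=
  ∀ (c : ℝ → K) (s₀ : ℝ) (v : E), (∀ᶠ s in 𝓝 s₀, ContinuousAt c s) →
    HasDerivAt (fun s => (c s : E)) v s₀ → v ≠ 0 →
      ¬ (fun s => f (c s) - f (c s₀)) =O[𝓝 s₀] fun s => s - s₀

theorem exists_half_le_abs_sin_add_sub_sin (θ : ℝ) :
    ∃ u ∈ Ioc 0 Real.pi, 1 / 2 ≤ |Real.sin (θ + u) - Real.sin θ| := by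
  have hpi := Real.pi_pos
  by_contra! hsmall
  have hsin : |Real.sin θ| < 1 / 4 := by
    have h := abs_lt.1 (hsmall Real.pi ⟨hpi, le_rfl⟩)
    rw [Real.sin_add_pi] at h
    exact abs_lt.2 ⟨by linarith, by linarith⟩
  have hcos : |Real.cos θ| < 3 / 4 := by
    have h := abs_lt.1 (hsmall (Real.pi / 2) ⟨by positivity, by linarith⟩)
    rw [Real.sin_add_pi_div_two] at h
    exact abs_lt.2 ⟨by linarith [abs_lt.1 hsin], by linarith [abs_lt.1 hsin]⟩
  linarith [Real.sin_sq_add_cos_sq θ, sq_lt_sq' (abs_lt.1 hsin).1 (abs_lt.1 hsin).2,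
    sq_lt_sq' (abs_lt.1 hcos).1 (abs_lt.1 hcos).2]

theorem exists_freq_half_le_abs_sin_sub_sin {q : ℝ} (hq : 0 < q) :
    ∃ M, ∀ x, ∃ t ∈ Ioc 0 q, 1 / 2 ≤ |Real.sin (M * (x + t)) - Real.sin (M * x)| := by
  have hpi := Real.pi_pos
  refine ⟨Real.pi / q, fun x => ?_⟩
  obtain ⟨u, ⟨hu, hu_le⟩, hosc⟩ := exists_half_le_abs_sin_add_sub_sin (Real.pi / q * x)
  refine ⟨q * (u / Real.pi), ⟨by positivity, ?_⟩, ?_⟩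
  · exact mul_le_of_le_one_right hq.le ((div_le_one hpi).2 hu_le)
  · convert hosc using 4
    field_simp

theorem exists_norm_le_forall_oscillation {X : Type*} [TopologicalSpace X] [CompactSpace X]
    (φ : C(X, ℝ)) {a q : ℝ} (ha : 0 < a) (hq : 0 < q) :
    ∃ w : C(X, ℝ), ‖w‖ ≤ a ∧
      ∀ x, ∃ t ∈ Ioc 0 q, ∀ y, φ y = φ x + t → a / 2 ≤ |w y - w x| := by
  obtain ⟨M, hM⟩ := exists_freq_half_le_abs_sin_sub_sin hq
  refine ⟨⟨fun x => a * Real.sin (M * φ x), by fun_prop⟩,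
    (ContinuousMap.norm_le _ ha.le).2 fun x => ?_, fun x => ?_⟩
  · change |a * Real.sin (M * φ x)| ≤ a
    rw [abs_mul, abs_of_pos ha]
    exact mul_le_of_le_one_right ha.le (Real.abs_sin_le_one _)
  · obtain ⟨t, ht, hosc⟩ := hM (φ x)
    refine ⟨t, ht, fun y hφy => ?_⟩
    change a / 2 ≤ |a * Real.sin (M * φ y) - a * Real.sin (M * φ x)|
    rw [hφy, ← mul_sub, abs_mul, abs_of_pos ha]
    linarith [mul_le_mul_of_nonneg_left hosc ha.le]

section SteepFunctions

variable {X : Type*} [PseudoMetricSpace X]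

theorem antitone_steepFunctions (φ : C(X, ℝ)) : Antitone (steepFunctions φ) := by
  rintro C C' hC f ⟨δ, hδ, hf⟩
  refine ⟨δ, hδ, fun x => ?_⟩
  obtain ⟨t, ht, hCt, hsteep⟩ := hf x
  have hle : C * t ≤ C' * t := by gcongr
  exact ⟨t, ht, hle.trans hCt, fun y hφy hyx =>
    (add_le_add_left hle δ).trans (hsteep y hφy (hyx.trans hle))⟩

theorem isOpen_steepFunctions [CompactSpace X] (φ : C(X, ℝ)) (C : ℝ) :
    IsOpen (steepFunctions φ C) := by
  rw [Metric.isOpen_iff]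
  rintro f ⟨δ, hδ, hf⟩
  refine ⟨δ / 4, by positivity, fun g hg => ⟨δ / 2, by positivity, fun x => ?_⟩⟩
  obtain ⟨t, ht, hCt, hsteep⟩ := hf x
  refine ⟨t, ht, hCt, fun y hφy hyx => ?_⟩
  have hfg (z : X) : dist (f z) (g z) ≤ δ / 4 := by
    rw [dist_comm]
    exact (ContinuousMap.dist_apply_le_dist z).trans (Metric.mem_ball.1 hg).le
  have htri : dist (f y) (f x) ≤ dist (f y) (g y) + dist (g y) (g x) + dist (g x) (f x) :=
    dist_triangle4 _ _ _ _
  rw [dist_comm (g x), Real.dist_eq (f y) (f x), Real.dist_eq (g y) (g x)] at htri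
  linarith [hsteep y hφy hyx, hfg x, hfg y]

theorem dense_steepFunctions [CompactSpace X] (φ : C(X, ℝ)) {C : ℝ} (hC : 0 < C) :
    Dense (steepFunctions φ C) := by
  rw [Metric.dense_iff]
  intro f ε hε
  obtain ⟨r, hr, hfr⟩ := Metric.uniformContinuous_iff.1
    (CompactSpace.uniformContinuous_of_continuous f.continuous) (ε / 8) (by positivity)
  obtain ⟨q, hq, hqr, hqε, hq_one⟩ : ∃ q > 0, q < r ∧ q ≤ ε / 16 ∧ q ≤ 1 := by
    have hlt : 0 < min r (min (ε / 16) 1) := by positivity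
    obtain ⟨q, hq, hqlt⟩ := exists_between hlt
    simp only [lt_min_iff] at hqlt
    exact ⟨q, hq, hqlt.1, hqlt.2.1.le, hqlt.2.2.le⟩
  obtain ⟨w, hw_norm, hw⟩ :=
    exists_norm_le_forall_oscillation φ (half_pos hε) (div_pos hq hC)
  refine ⟨f + w, ?_, ε / 16, by positivity, fun x => ?_⟩
  · rw [Metric.mem_ball, dist_eq_norm, add_sub_cancel_left]
    linarith
  obtain ⟨t, ⟨ht, htq⟩, hosc⟩ := hw x
  have hCt : C * t ≤ q := (le_div_iff₀' hC).1 htq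
  refine ⟨t, ht, hCt.trans hq_one, fun y hφy hyx => ?_⟩
  have hf_small : |f x - f y| < ε / 8 := by
    rw [abs_sub_comm]
    exact hfr (hyx.trans_lt (hCt.trans_lt hqr))
  have hw_large : ε / 2 / 2 ≤ |w y - w x| := hosc y hφy
  calc C * t + ε / 16 ≤ |w y - w x| - |f x - f y| := by linarith
    _ ≤ |(w y - w x) - (f x - f y)| := abs_sub_abs_le_abs_sub _ _
    _ = |(f + w) y - (f + w) x| := by
      simp only [ContinuousMap.add_apply]
      ring_nf

theorem eventually_residual_forall_mem_steepFunctions [CompactSpace X] (φ : C(X, ℝ)) :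
    ∀ᶠ f in residual C(X, ℝ), ∀ C, f ∈ steepFunctions φ C := by
  have hnat : ∀ᶠ f in residual C(X, ℝ), ∀ n : ℕ, f ∈ steepFunctions φ (n + 1) :=
    eventually_countable_forall.2 fun n =>
      residual_of_dense_open (isOpen_steepFunctions φ _) (dense_steepFunctions φ n.cast_add_one_pos)
  filter_upwards [hnat] with f hf C
  obtain ⟨n, hn⟩ := exists_nat_ge C
  exact antitone_steepFunctions φ (by linarith) (hf n)

end SteepFunctions

theorem nhds_le_map_of_not_isLocalExtr {X : Type*} [TopologicalSpace X] [LocallyConnectedSpace X]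
    {α : Type*} [LinearOrder α] [TopologicalSpace α] [OrderTopology α] {u : X → α} {x₀ : X}
    (hcont : ∀ᶠ x in 𝓝 x₀, ContinuousAt u x) (hu : ¬ IsLocalExtr u x₀) :
    𝓝 (u x₀) ≤ map u (𝓝 x₀) := by
  obtain ⟨hmin, hmax⟩ := not_or.1 hu
  intro S hS
  obtain ⟨V, ⟨hV_open, hxV, hV_conn⟩, hVS⟩ :=
    (LocallyConnectedSpace.open_connected_basis x₀).mem_iff.1 (inter_mem hS hcont)
  have hV : V ∈ 𝓝 x₀ := hV_open.mem_nhds hxV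
  obtain ⟨y, hy, hyV⟩ := ((not_eventually.1 hmin).and_eventually hV).exists
  obtain ⟨z, hz, hzV⟩ := ((not_eventually.1 hmax).and_eventually hV).exists
  have himage : IsPreconnected (u '' V) :=
    hV_conn.isPreconnected.image u fun x hx => (hVS hx).2.continuousWithinAt
  filter_upwards [Icc_mem_nhds (not_le.1 hy) (not_le.1 hz)] with r hr
  obtain ⟨x, hx, rfl⟩ :=
    himage.Icc_subset (mem_image_of_mem u hyV) (mem_image_of_mem u hzV) hr
  exact (hVS hx).1

theorem not_isBigO_sub_of_forall_mem_steepFunctions {X : Type*} [PseudoMetricSpace X]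
    {φ f : C(X, ℝ)} (hf : ∀ C, f ∈ steepFunctions φ C) {c : ℝ → X} {s₀ m : ℝ}
    (hcont : ∀ᶠ s in 𝓝 s₀, ContinuousAt (φ ∘ c) s)
    (hc : (fun s => dist (c s) (c s₀)) =O[𝓝 s₀] fun s => s - s₀)
    (hφ : HasDerivAt (φ ∘ c) m s₀) (hm : m ≠ 0) :
    ¬ (fun s => f (c s) - f (c s₀)) =O[𝓝 s₀] fun s => s - s₀ := by
  intro hfc
  have htime : (fun s => s - s₀) =O[𝓝 s₀] fun s => φ (c s) - φ (c s₀) :=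
    (hφ.isTheta_sub hm).isBigO_symm.comp_tendsto (tendsto_id.prodMk tendsto_const_pure)
  obtain ⟨A, hA⟩ := (hc.trans htime).bound
  obtain ⟨B, hB⟩ := (hfc.trans htime).bound
  have hopen : 𝓝 (φ (c s₀)) ≤ map (φ ∘ c) (𝓝 s₀) :=
    nhds_le_map_of_not_isLocalExtr hcont fun hextr => hm (hextr.hasDerivAt_eq_zero hφ)
  obtain ⟨τ, hτ, hball⟩ := Metric.mem_nhds_iff.1 (hopen (image_mem_map (hA.and hB)))
  obtain ⟨C, hC⟩ := exists_gt (max τ⁻¹ (max A B))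
  simp only [max_lt_iff] at hC
  obtain ⟨hτC, hAC, hBC⟩ := hC
  obtain ⟨δ, hδ, hsteep⟩ := hf C
  obtain ⟨t, ht, hCt, hlarge⟩ := hsteep (c s₀)
  have htτ : t < τ := by
    have hlt : τ⁻¹ * t < 1 := (mul_lt_mul_of_pos_right hτC ht).trans_le hCt
    rwa [inv_mul_lt_iff₀ hτ, mul_one] at hlt
  obtain ⟨s, ⟨hdist, hsmall⟩, hs⟩ : φ (c s₀) + t ∈ _ := hball (by simpa [abs_of_pos ht] using htτ)
  have hφs : φ (c s) = φ (c s₀) + t := hs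
  rw [hφs, add_sub_cancel_left, Real.norm_of_nonneg ht.le] at hdist hsmall
  rw [Real.norm_of_nonneg dist_nonneg] at hdist
  have hAt : A * t ≤ C * t := by gcongr
  have hBt : B * t ≤ C * t := by gcongr
  have hincr := hlarge (c s) hφs (hdist.trans hAt)
  rw [Real.norm_eq_abs] at hsmall
  linarith

theorem exists_countable_strongDual_apply_ne_zero (𝕜 : Type*) [RCLike 𝕜] {E : Type*}
    [NormedAddCommGroup E] [NormedSpace 𝕜 E] {S : Set E} (hS : TopologicalSpace.IsSeparable S) :
    ∃ L : Set (StrongDual 𝕜 E), L.Countable ∧ ∀ v ∈ S, v ≠ 0 → ∃ ℓ ∈ L, ℓ v ≠ 0 := by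
  obtain ⟨D, hD, hSD⟩ := hS
  choose ℓ hℓ_norm hℓ using fun x : E => exists_dual_vector'' 𝕜 x
  refine ⟨ℓ '' D, hD.image ℓ, fun v hv hv0 => ?_⟩
  obtain ⟨x, hxD, hx⟩ := Metric.mem_closure_iff.1 (hSD hv) (‖v‖ / 2) (by positivity)
  refine ⟨ℓ x, mem_image_of_mem ℓ hxD, fun hzero => ?_⟩
  rw [dist_eq_norm] at hx
  have hx_le : ‖x‖ ≤ ‖v - x‖ := calc
    ‖x‖ = ‖ℓ x (v - x)‖ := by simp [hzero, hℓ]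
    _ ≤ 1 * ‖v - x‖ := (ℓ x).le_of_opNorm_le (hℓ_norm x) _
    _ = ‖v - x‖ := one_mul _
  linarith [norm_le_norm_add_norm_sub x v, norm_sub_rev x v]

theorem mem_closure_span_of_hasDerivAt {𝕜 E : Type*} [NontriviallyNormedField 𝕜]
    [NormedAddCommGroup E] [NormedSpace 𝕜 E] {K : Set E} {c : 𝕜 → E} {s₀ : 𝕜} {v : E}
    (hcK : ∀ s, c s ∈ K) (hc : HasDerivAt c v s₀) :
    v ∈ closure (Submodule.span 𝕜 K : Set E) := by
  have hspan : Submodule.span 𝕜 (c '' univ) ≤ Submodule.span 𝕜 K :=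
    Submodule.span_mono (image_subset_iff.2 fun s _ => hcK s)
  exact closure_mono hspan (range_deriv_subset_closure_span_image c dense_univ ⟨s₀, hc.deriv⟩)

theorem dense_Gδ_stronglyNowhereDiff_general {E : Type*} [NormedAddCommGroup E]
    [NormedSpace ℝ E] {K : Set E} (hK : IsCompact K) :
    ∃ G : Set C(K, ℝ), IsGδ G ∧ Dense G ∧ ∀ f ∈ G, NowhereLipschitzAlongCurves f := by
  have : CompactSpace K := isCompact_iff_compactSpace.1 hK
  obtain ⟨L, hL, hL_ne⟩ :=
    exists_countable_strongDual_apply_ne_zero ℝ (hK.isSeparable.span (R := ℝ)).closure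
  have hsteep : ∀ᶠ f in residual C(K, ℝ), ∀ ℓ ∈ L, ∀ C,
      f ∈ steepFunctions ((ℓ : C(E, ℝ)).restrict K) C :=
    (eventually_countable_ball hL).2 fun ℓ _ => eventually_residual_forall_mem_steepFunctions _
  obtain ⟨G, hG_steep, hGδ, hG_dense⟩ := mem_residual.1 hsteep
  refine ⟨G, hGδ, hG_dense, fun f hf c s₀ v hcont hc hv => ?_⟩
  obtain ⟨ℓ, hℓ, hℓv⟩ := hL_ne v (mem_closure_span_of_hasDerivAt (fun s => (c s).2) hc) hv
  refine not_isBigO_sub_of_forall_mem_steepFunctions (hG_steep hf ℓ hℓ)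
    (hcont.mono fun s hs => (ContinuousMap.continuous _).continuousAt.comp hs) ?_
    (ℓ.hasFDerivAt.comp_hasDerivAt s₀ hc) hℓv
  simpa only [Subtype.dist_eq, dist_eq_norm] using hc.isBigO_sub.norm_left

theorem NowhereLipschitzAlongCurves.stronglyNowhereDiffOn_extendCl {d : ℕ}
    {U : Set (EuclideanSpace ℝ (Fin d))} {f : C(closure U, ℝ)}
    (hf : NowhereLipschitzAlongCurves f) : StronglyNowhereDiffOn (extendCl U f) U := by
  rintro a b c ⟨hab, hc, hspeed, -⟩ hcU s₀ hs₀ hdiff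
  have hs₀' : s₀ ∈ Icc a b := Ioo_subset_Icc_self hs₀
  have hnhds : Icc a b ∈ 𝓝 s₀ := Icc_mem_nhds hs₀.1 hs₀.2
  let path : ℝ → closure U :=
    IccExtend hab.le fun s => ⟨c s, subset_closure (hcU s s.2)⟩
  have hpath_cont : Continuous path :=
    (hc.continuousOn.domRestrict.subtype_mk _).Icc_extend'
  have hpath {s : ℝ} (hs : s ∈ Icc a b) : (path s : EuclideanSpace ℝ (Fin d)) = c s := by
    simp only [path, IccExtend_of_mem _ _ hs]
  have hpath_deriv : HasDerivAt (fun s => (path s : EuclideanSpace ℝ (Fin d)))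
      (derivWithin c (Icc a b) s₀) s₀ :=
    (hc.differentiableOn one_ne_zero s₀ hs₀').hasDerivWithinAt.hasDerivAt hnhds
      |>.congr_of_eventuallyEq (eventually_of_mem hnhds fun s hs => hpath hs)
  have hvelocity : derivWithin c (Icc a b) s₀ ≠ 0 :=
    norm_ne_zero_iff.1 (by simp [hspeed s₀ hs₀'])
  have hext {s : ℝ} (hs : s ∈ Icc a b) : (extendCl U f ∘ c) s = f (path s) := by
    rw [Function.comp_apply, ← hpath hs, extendCl, dif_pos (path s).2]
  refine hf path s₀ _ (.of_forall fun s => hpath_cont.continuousAt) hpath_deriv hvelocity ?_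
  refine (hdiff.differentiableAt hnhds).isBigO_sub.congr' ?_ .rfl
  filter_upwards [hnhds] with s hs
  rw [hext hs, hext hs₀']

/-- Main theorem: for a bounded open `U ⊆ ℝ^d`, the set of `f ∈ C(U̅)` whose restriction to
`U` is strongly nowhere differentiable contains a dense `G_δ` subset of `C(U̅)`. -/
theorem dense_Gδ_stronglyNowhereDiff {d : ℕ} (U : Set (EuclideanSpace ℝ (Fin d)))
    (hU : IsOpen U) (hUb : Bornology.IsBounded U) :
    ∃ G : Set C(closure U, ℝ), IsGδ G ∧ Dense G ∧
      ∀ f ∈ G, StronglyNowhereDiffOn (extendCl U f) U := by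
  obtain ⟨G, hGδ, hG_dense, hG⟩ := dense_Gδ_stronglyNowhereDiff_general hUb.isCompact_closure
  exact ⟨G, hGδ, hG_dense, fun f hf => (hG f hf).stronglyNowhereDiffOn_extendCl⟩
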